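/- Monotonicity of derived period addition: for all valid dates D1 and D2 with D1 < D2, every period p = (py, pm, pd), and every rounding mode r ∈ {↓, ↑}, one has D1 +r p ≤ D2 +r p. -/

import Mathlib

/-- A value is either a date `(y, m, d)` (a triple of integers in the
Gregorian calendar) or the error element `⊥`. -/
inductive DValue : Type
  | date (y m d : ℤ) : DValue
  | bot : DValue
deriving DecidableEq

/-- `nb_days(y, m)`: the number of days of month `m` in year `y`
(meaningful for `1 ≤ m ≤ 12`). A year is leap iff it is divisible by 4
and not by 100, or divisible by 400. -/
def nbDays (y m : ℤ) : ℤ :=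
  if m = 2 then (if (4 ∣ y ∧ ¬ (100 ∣ y)) ∨ 400 ∣ y then 29 else 28)
  else if m = 4 ∨ m = 6 ∨ m = 9 ∨ m = 11 then 30
  else 31

theorem nbDays_bounds (y m : ℤ) : 28 ≤ nbDays y m ∧ nbDays y m ≤ 31 := by
  unfold nbDays; split_ifs <;> omega

/-- A date `(y, m, d)` is valid iff `1 ≤ m ≤ 12` and `1 ≤ d ≤ nb_days(y, m)`. -/
def ValidDate (y m d : ℤ) : Prop :=
  1 ≤ m ∧ m ≤ 12 ∧ 1 ≤ d ∧ d ≤ nbDays y m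

/-- Year addition: `(y,m,d) +y n = (y+n,m,d)`; `⊥ +y n = ⊥`. -/
def DValue.addY : DValue → ℤ → DValue
  | .date y m d, n => .date (y + n) m d
  | .bot, _ => .bot

/-- Month addition on a date `(y, m, d)` (with `⊥` for a month component
outside `[1,12]`):
`(y,m,d) +m n = (y,m+n,d)` if `1 ≤ m+n ≤ 12`,
`= (y+1,m,d) +m (n−12)` if `m+n > 12`, `= (y−1,m,d) +m (n+12)` if `m+n < 1`. -/
def addMonths (y m d n : ℤ) : DValue :=
  if _h : 1 ≤ m ∧ m ≤ 12 then
    if _h1 : 1 ≤ m + n ∧ m + n ≤ 12 then .date y (m + n) d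
    else if _h2 : 12 < m + n then addMonths (y + 1) m d (n - 12)
    else addMonths (y - 1) m d (n + 12)
  else .bot
termination_by (m + n - 12).toNat + (1 - (m + n)).toNat
decreasing_by all_goals omega

/-- Month addition on values: `⊥ +m n = ⊥`. -/
def DValue.addM : DValue → ℤ → DValue
  | .date y m d, n => addMonths y m d n
  | .bot, _ => .bot

/-- Day addition, following the rules:
for `(y,m,d)` with `1 ≤ d ≤ nb_days(y,m)`:
`(y,m,d) +d n = (y,m,d+n)` if `1 ≤ d+n ≤ nb_days(y,m)`;
`= ((y,m,1) +m 1) +d (n − (nb_days(y,m) − d) − 1)` if `d+n > nb_days(y,m)`;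
`= (y,m,1) +d (d−1+n)` if `d+n ≤ 0` and `d > 1`;
if `n+1 ≤ 0` then, letting `(y',m',d') = (y,m,1) +m (−1)`,
`(y,m,1) +d n = (y',m',1) +d (n + nb_days(y',m'))`.
If `d < 1` or `d > nb_days(y,m)` (or the month is out of range), the result is `⊥`. -/
def addDays (y m d n : ℤ) : DValue :=
  if _hm : 1 ≤ m ∧ m ≤ 12 then
    if _hd : 1 ≤ d ∧ d ≤ nbDays y m then
      if _h1 : 1 ≤ d + n ∧ d + n ≤ nbDays y m then .date y m (d + n)
      else if _h2 : nbDays y m < d + n then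
        match addMonths y m 1 1 with
        | .date y' m' _ => addDays y' m' 1 (n - (nbDays y m - d) - 1)
        | .bot => .bot
      else if _h3 : 1 < d then addDays y m 1 (d - 1 + n)
      else
        match _hprev : addMonths y m 1 (-1) with
        | .date y' m' _ => addDays y' m' 1 (n + nbDays y' m')
        | .bot => .bot
    else .bot
  else .bot
termination_by (if 0 ≤ n then n else 62 - n).toNat
decreasing_by
  · split_ifs <;> omega
  · split_ifs <;> omega
  · have h28 := nbDays_bounds y' m'
    split_ifs <;> omega

/-- Day addition on values: `⊥ +d n = ⊥`. -/
def DValue.addD : DValue → ℤ → DValue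
  | .date y m d, n => addDays y m d n
  | .bot, _ => .bot

/-- Rounding modes: down (`↓`), up (`↑`) and error (`⊥`). -/
inductive RMode : Type
  | down | up | err
deriving DecidableEq

/-- Rounding `rnd_r`: if `1 ≤ d ≤ nb_days(y,m)` then `rnd_r(y,m,d) = (y,m,d)`;
if `d > nb_days(y,m)` then `rnd_↓(y,m,d) = (y,m,nb_days(y,m))`,
`rnd_↑(y,m,d) = (y',m',1)` where `(y',m',d') = (y,m,d) +m 1`, and
`rnd_⊥(y,m,d) = ⊥`; if `d < 1` then `rnd_r(y,m,d) = ⊥`; `rnd_r(⊥) = ⊥`. -/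
def rnd (r : RMode) : DValue → DValue
  | .date y m d =>
    if 1 ≤ d ∧ d ≤ nbDays y m then .date y m d
    else if d < 1 then .bot
    else
      match r with
      | .down => .date y m (nbDays y m)
      | .up =>
        match addMonths y m d 1 with
        | .date y' m' _ => .date y' m' 1
        | .bot => .bot
      | .err => .bot
  | .bot => .bot

/-- A period `(py, pm, pd)`: a number of years, months and days. -/
structure Period : Type where
  py : ℤ
  pm : ℤ
  pd : ℤ
deriving DecidableEq

/-- Derived addition of a period with rounding mode `r`:
`e +r (py, pm, pd) = rnd_r((e +y py) +m pm) +d pd`. -/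
def addPeriod (r : RMode) (e : DValue) (p : Period) : DValue :=
  ((rnd r ((e.addY p.py).addM p.pm)).addD p.pd)

/-- Strict lexicographic order on dates. -/
def DateLt (y1 m1 d1 y2 m2 d2 : ℤ) : Prop :=
  y1 < y2 ∨ (y1 = y2 ∧ (m1 < m2 ∨ (m1 = m2 ∧ d1 < d2)))

/-- Large lexicographic order on dates. -/
def DateLe (y1 m1 d1 y2 m2 d2 : ℤ) : Prop :=
  y1 < y2 ∨ (y1 = y2 ∧ (m1 < m2 ∨ (m1 = m2 ∧ d1 ≤ d2)))

/-- Comparison lifted to values: it holds only between two dates. -/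
def DValue.lt : DValue → DValue → Prop
  | .date y1 m1 d1, .date y2 m2 d2 => DateLt y1 m1 d1 y2 m2 d2
  | _, _ => False

/-- Comparison lifted to values: it holds only between two dates. -/
def DValue.le : DValue → DValue → Prop
  | .date y1 m1 d1, .date y2 m2 d2 => DateLe y1 m1 d1 y2 m2 d2
  | _, _ => False

/-- A value is a valid date: it is not `⊥` and its components are valid. -/
def IsValidDate : DValue → Prop
  | .date y m d => ValidDate y m d
  | .bot => False

def yearOf : DValue → ℤ
  | .date y _ _ => y
  | .bot => 0

def monthOf : DValue → ℤ
  | .date _ m _ => m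
  | .bot => 0

def dayOf : DValue → ℤ
  | .date _ _ d => d
  | .bot => 0

/-- Date units: year, month, day. -/
inductive DUnit : Type
  | year | month | day
deriving DecidableEq

/-- Addition of `n` units to a value. -/
def addU : DUnit → DValue → ℤ → DValue
  | .year, v, n => v.addY n
  | .month, v, n => v.addM n
  | .day, v, n => v.addD n

/-- Componentwise addition of periods. -/
def Period.add (p q : Period) : Period :=
  ⟨p.py + q.py, p.pm + q.pm, p.pd + q.pd⟩

/-!
Number the months consecutively and the days consecutively: a month addition is a translation of
month indices, and a day addition is a translation of day numbers. As every month has at least one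
day, the lexicographic order on valid dates is the order of day numbers. Between the two additions,
`rnd_↓` and `rnd_↑` send a date to the greatest valid date below it and to the least valid date
above it, hence they are monotone.
-/

section SignedSum

variable {M : Type*} [AddCommGroup M]

/-- The discrete antiderivative of `f` on `ℤ` that vanishes at `0`; for negative `k` it is minus the
sum of `f` over `[k, 0)`. -/
noncomputable def signedSum (f : ℤ → M) (k : ℤ) : M :=
  ∑ i ∈ Finset.Ico 0 k, f i - ∑ i ∈ Finset.Ico k 0, f i

theorem signedSum_add_one (f : ℤ → M) (k : ℤ) :
    signedSum f (k + 1) = signedSum f k + f k := by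
  rcases le_or_gt 0 k with hk | hk
  · rw [signedSum, signedSum, ← Finset.insert_Ico_right_eq_Ico_add_one hk,
      Finset.sum_insert Finset.right_notMem_Ico,
      Finset.Ico_eq_empty_of_le hk, Finset.Ico_eq_empty_of_le (by omega : 0 ≤ k + 1)]
    abel
  · rw [signedSum, signedSum, ← Finset.insert_Ico_add_one_left_eq_Ico hk,
      Finset.sum_insert (by simp),
      Finset.Ico_eq_empty_of_le hk.le, Finset.Ico_eq_empty_of_le (by omega : k + 1 ≤ 0)]
    abel

theorem signedSum_strictMono [PartialOrder M] [IsOrderedAddMonoid M] {f : ℤ → M}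
    (hf : ∀ i, 0 < f i) : StrictMono (signedSum f) :=
  strictMono_int_of_lt_succ fun k => by
    rw [signedSum_add_one]
    exact lt_add_of_pos_right _ (hf k)

end SignedSum

section Calendar

variable {y m d n : ℤ} {r : RMode} {u v w : DValue}

/-- The position of month `m` of year `y` in the consecutive numbering of months in which January of
year `0` has index `0`; month `k` of that numbering is month `k % 12 + 1` of year `k / 12`. -/
def monthIndex (y m : ℤ) : ℤ :=
  12 * y + m - 1

/-- The number of days of the month of index `k`. -/
def monthLength (k : ℤ) : ℤ :=
  nbDays (k / 12) (k % 12 + 1)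

/-- The number of days from 1 January of year `0` to the first day of the month of index `k`,
negative for `k < 0`. -/
noncomputable def daysBefore (k : ℤ) : ℤ :=
  signedSum monthLength k

theorem monthIndex_ediv_emod (k : ℤ) : monthIndex (k / 12) (k % 12 + 1) = k := by
  unfold monthIndex
  omega

theorem monthIndex_ediv (hm : 1 ≤ m ∧ m ≤ 12) : monthIndex y m / 12 = y := by
  unfold monthIndex
  omega

theorem monthIndex_emod (hm : 1 ≤ m ∧ m ≤ 12) : monthIndex y m % 12 + 1 = m := by
  unfold monthIndex
  omega

theorem monthLength_monthIndex (hm : 1 ≤ m ∧ m ≤ 12) :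
    monthLength (monthIndex y m) = nbDays y m := by
  rw [monthLength, monthIndex_ediv hm, monthIndex_emod hm]

theorem nbDays_pos (y m : ℤ) : 0 < nbDays y m :=
  lt_of_lt_of_le (by norm_num) (nbDays_bounds y m).1

theorem daysBefore_add_one (k : ℤ) : daysBefore (k + 1) = daysBefore k + monthLength k :=
  signedSum_add_one monthLength k

theorem daysBefore_add_monthLength_le {k l : ℤ} (h : k < l) :
    daysBefore k + monthLength k ≤ daysBefore l := by
  rw [← daysBefore_add_one]
  exact (signedSum_strictMono fun _ => nbDays_pos _ _).monotone h

theorem addMonths_eq (hm : 1 ≤ m ∧ m ≤ 12) :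
    addMonths y m d n =
      .date ((monthIndex y m + n) / 12) ((monthIndex y m + n) % 12 + 1) d := by
  fun_induction addMonths y m d n with
  | case1 y n _ hrange =>
    simp only [monthIndex, DValue.date.injEq, and_true]
    omega
  | case2 y n _ _ _ ih =>
    rw [ih, show monthIndex (y + 1) m + (n - 12) = monthIndex y m + n by unfold monthIndex; ring]
  | case3 y n _ _ _ ih =>
    rw [ih, show monthIndex (y - 1) m + (n + 12) = monthIndex y m + n by unfold monthIndex; ring]
  | case4 y n hinvalid => exact absurd hm hinvalid

theorem monthIndex_of_addMonths_eq_date {y' m' d' : ℤ} (hm : 1 ≤ m ∧ m ≤ 12)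
    (h : addMonths y m d n = .date y' m' d') :
    (1 ≤ m' ∧ m' ≤ 12) ∧ monthIndex y' m' = monthIndex y m + n := by
  rw [addMonths_eq hm, DValue.date.injEq] at h
  obtain ⟨rfl, rfl, rfl⟩ := h
  exact ⟨by omega, monthIndex_ediv_emod _⟩

theorem DateLt.dateLe {y' m' d' : ℤ} (h : DateLt y m d y' m' d') : DateLe y m d y' m' d' :=
  h.imp_right <| And.imp_right <| Or.imp_right <| And.imp_right le_of_lt

namespace DValue

/-- The dates that rounding can turn into valid ones: the month is valid and the day is positive,
but it may exceed the length of the month, as it may after a month addition. -/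
def IsRoundable : DValue → Prop
  | .date _ m d => (1 ≤ m ∧ m ≤ 12) ∧ 1 ≤ d
  | .bot => False

/-- The consecutive numbering of days in which 1 January of year `0` has number `1`, with the junk
value `0` at `⊥`. -/
noncomputable def dayNumber : DValue → ℤ
  | .date y m d => daysBefore (monthIndex y m) + d
  | .bot => 0

theorem dayNumber_date_eq_add_sub_one (y m d : ℤ) :
    (date y m d).dayNumber = (date y m 1).dayNumber + (d - 1) := by
  simp only [dayNumber]
  ring

theorem dayNumber_first_of_next_month {y' m' : ℤ} (hm : 1 ≤ m ∧ m ≤ 12)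
    (h : monthIndex y' m' = monthIndex y m + 1) :
    (date y' m' 1).dayNumber = (date y m 1).dayNumber + nbDays y m := by
  simp only [dayNumber, h, daysBefore_add_one, monthLength_monthIndex hm]
  ring

theorem date_le_date_of_day_le {d' : ℤ} (h : d ≤ d') : (date y m d).le (date y m d') :=
  .inr ⟨rfl, .inr ⟨rfl, h⟩⟩

theorem le.trans (huv : u.le v) (hvw : v.le w) : u.le w := by
  cases u <;> cases v <;> cases w <;> simp only [le, DateLe] at *
  omega

theorem le_iff_dayNumber_le (hu : IsValidDate u) (hv : IsValidDate v) :
    u.le v ↔ u.dayNumber ≤ v.dayNumber := by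
  rcases u with ⟨y, m, d⟩ | _ <;> rcases v with ⟨y', m', d'⟩ | _ <;> try contradiction
  obtain ⟨hm, hm', hd, hd'⟩ := hu
  obtain ⟨hn, hn', he, he'⟩ := hv
  have hlen := monthLength_monthIndex (y := y) ⟨hm, hm'⟩
  have hlen' := monthLength_monthIndex (y := y') ⟨hn, hn'⟩
  simp only [le, DateLe, dayNumber]
  rcases lt_trichotomy (monthIndex y m) (monthIndex y' m') with hlt | heq | hgt
  · have := daysBefore_add_monthLength_le hlt
    unfold monthIndex at *
    omega
  · rw [heq]
    unfold monthIndex at *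
    omega
  · have := daysBefore_add_monthLength_le hgt
    unfold monthIndex at *
    omega

theorem IsRoundable.addY (hu : u.IsRoundable) (n : ℤ) : (u.addY n).IsRoundable := by
  cases u <;> exact hu

theorem addY_mono (h : u.le v) (n : ℤ) : (u.addY n).le (v.addY n) := by
  cases u <;> cases v <;> simp only [le, DateLe, addY] at *
  omega

theorem IsRoundable.addM (hu : u.IsRoundable) (n : ℤ) : (u.addM n).IsRoundable := by
  rcases u with ⟨y, m, d⟩ | _
  · simp only [DValue.addM, addMonths_eq hu.1]
    exact ⟨by omega, hu.2⟩
  · exact hu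

theorem addM_mono (hu : u.IsRoundable) (hv : v.IsRoundable) (h : u.le v) (n : ℤ) :
    (u.addM n).le (v.addM n) := by
  rcases u with ⟨y, m, d⟩ | _ <;> rcases v with ⟨y', m', d'⟩ | _ <;> try contradiction
  obtain ⟨hm, -⟩ := hu
  obtain ⟨hm', -⟩ := hv
  simp only [addM, addMonths_eq hm, addMonths_eq hm', le, DateLe, monthIndex] at *
  omega

end DValue

open DValue

theorem validDate_one (hm : 1 ≤ m ∧ m ≤ 12) : ValidDate y m 1 :=
  ⟨hm.1, hm.2, le_rfl, nbDays_pos y m⟩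

theorem ValidDate.isRoundable (h : ValidDate y m d) : IsRoundable (.date y m d) :=
  ⟨⟨h.1, h.2.1⟩, h.2.2.1⟩

theorem DValue.IsRoundable.validDate_or_nbDays_lt (h : IsRoundable (.date y m d)) :
    ValidDate y m d ∨ nbDays y m < d :=
  (le_or_gt d (nbDays y m)).imp_left fun hd => ⟨h.1.1, h.1.2, h.2, hd⟩

theorem rnd_of_validDate (h : ValidDate y m d) : rnd r (.date y m d) = .date y m d :=
  if_pos h.2.2

theorem rnd_down_of_nbDays_lt (h : nbDays y m < d) :
    rnd .down (.date y m d) = .date y m (nbDays y m) := by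
  have := nbDays_pos y m
  simp only [rnd, if_neg (show ¬(1 ≤ d ∧ d ≤ nbDays y m) by omega), if_neg (show ¬d < 1 by omega)]

theorem rnd_up_of_nbDays_lt (hm : 1 ≤ m ∧ m ≤ 12) (h : nbDays y m < d) :
    rnd .up (.date y m d) =
      .date ((monthIndex y m + 1) / 12) ((monthIndex y m + 1) % 12 + 1) 1 := by
  have := nbDays_pos y m
  simp only [rnd, if_neg (show ¬(1 ≤ d ∧ d ≤ nbDays y m) by omega), if_neg (show ¬d < 1 by omega),
    addMonths_eq hm]

theorem DValue.IsRoundable.isValidDate_rnd (hr : r = .down ∨ r = .up) (hu : u.IsRoundable) :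
    IsValidDate (rnd r u) := by
  rcases u with ⟨y, m, d⟩ | _
  · rcases hu.validDate_or_nbDays_lt with hvalid | hlt
    · rwa [rnd_of_validDate hvalid]
    · rcases hr with rfl | rfl
      · rw [rnd_down_of_nbDays_lt hlt]
        exact ⟨hu.1.1, hu.1.2, nbDays_pos y m, le_rfl⟩
      · rw [rnd_up_of_nbDays_lt hu.1 hlt]
        exact validDate_one (by omega)
  · exact hu

theorem rnd_down_le (hu : u.IsRoundable) : (rnd .down u).le u := by
  rcases u with ⟨y, m, d⟩ | _
  · rcases hu.validDate_or_nbDays_lt with hvalid | hlt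
    · rw [rnd_of_validDate hvalid]
      exact date_le_date_of_day_le le_rfl
    · rw [rnd_down_of_nbDays_lt hlt]
      exact date_le_date_of_day_le hlt.le
  · exact hu

theorem le_rnd_down (hw : IsValidDate w) (hu : u.IsRoundable) (h : w.le u) :
    w.le (rnd .down u) := by
  rcases w with ⟨y', m', d'⟩ | _ <;> rcases u with ⟨y, m, d⟩ | _ <;> try contradiction
  rcases hu.validDate_or_nbDays_lt with hvalid | hlt
  · rwa [rnd_of_validDate hvalid]
  · obtain ⟨-, -, -, hd'⟩ := hw
    rw [rnd_down_of_nbDays_lt hlt]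
    rcases h with hy | ⟨rfl, hm | ⟨rfl, -⟩⟩
    · exact .inl hy
    · exact .inr ⟨rfl, .inl hm⟩
    · exact date_le_date_of_day_le hd'

theorem le_rnd_up (hu : u.IsRoundable) : u.le (rnd .up u) := by
  rcases u with ⟨y, m, d⟩ | _
  · rcases hu.validDate_or_nbDays_lt with hvalid | hlt
    · rw [rnd_of_validDate hvalid]
      exact date_le_date_of_day_le le_rfl
    · have hm := hu.1
      simp only [rnd_up_of_nbDays_lt hm hlt, DValue.le, DateLe, monthIndex]
      omega
  · exact hu

theorem rnd_up_le (hu : u.IsRoundable) (hw : IsValidDate w) (h : u.le w) :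
    (rnd .up u).le w := by
  rcases u with ⟨y, m, d⟩ | _ <;> rcases w with ⟨y', m', d'⟩ | _ <;> try contradiction
  rcases hu.validDate_or_nbDays_lt with hvalid | hlt
  · rwa [rnd_of_validDate hvalid]
  · have hm := hu.1
    obtain ⟨hm₁, hm₂, hd₁, hd₂⟩ := hw
    have hmonth : monthIndex y m < monthIndex y' m' := by
      unfold monthIndex
      rcases h with hy | ⟨rfl, hm | ⟨rfl, hd⟩⟩ <;> omega
    simp only [rnd_up_of_nbDays_lt hm hlt, DValue.le, DateLe, monthIndex] at *
    omega

theorem rnd_mono (hr : r = .down ∨ r = .up) (hu : u.IsRoundable) (hv : v.IsRoundable)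
    (h : u.le v) : (rnd r u).le (rnd r v) := by
  have hu' := hu.isValidDate_rnd hr
  have hv' := hv.isValidDate_rnd hr
  rcases hr with rfl | rfl
  · exact le_rnd_down hu' hv ((rnd_down_le hu).trans h)
  · exact rnd_up_le hu hv' (h.trans (le_rnd_up hv))

theorem isValidDate_addDays_and_dayNumber_eq (h : ValidDate y m d) :
    IsValidDate (addDays y m d n) ∧
      (addDays y m d n).dayNumber = (DValue.date y m d).dayNumber + n := by
  fun_induction addDays y m d n with
  | case1 y m d n hm _ hday =>
    refine ⟨⟨hm.1, hm.2, hday⟩, ?_⟩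
    simp only [dayNumber, add_assoc]
  | case2 y m d n hm _ _ _ y' m' _ hnext ih =>
    obtain ⟨hm', hindex⟩ := monthIndex_of_addMonths_eq_date hm hnext
    obtain ⟨hvalid, hday⟩ := ih (validDate_one hm')
    refine ⟨hvalid, ?_⟩
    rw [hday, dayNumber_first_of_next_month hm hindex, dayNumber_date_eq_add_sub_one y m d]
    ring
  | case3 y m d n hm _ _ _ hbot => simp [addMonths_eq hm] at hbot
  | case4 y m d n hm _ _ _ _ ih =>
    obtain ⟨hvalid, hday⟩ := ih (validDate_one hm)
    refine ⟨hvalid, ?_⟩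
    rw [hday, dayNumber_date_eq_add_sub_one y m d]
    ring
  | case5 y m d n hm hd _ _ hfirst y' m' _ hprev ih =>
    obtain ⟨hm', hindex⟩ := monthIndex_of_addMonths_eq_date hm hprev
    obtain ⟨hvalid, hday⟩ := ih (validDate_one hm')
    obtain rfl : d = 1 := by omega
    refine ⟨hvalid, ?_⟩
    rw [hday, dayNumber_first_of_next_month hm' (by omega : monthIndex y m = monthIndex y' m' + 1)]
    ring
  | case6 y m d n hm _ _ _ _ hbot => simp [addMonths_eq hm] at hbot
  | case7 y m d n _ hd => exact absurd h.2.2 hd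
  | case8 y m d n hm => exact absurd ⟨h.1, h.2.1⟩ hm

theorem IsValidDate.addD (hu : IsValidDate u) (n : ℤ) : IsValidDate (u.addD n) := by
  cases u with
  | date => exact (isValidDate_addDays_and_dayNumber_eq hu).1
  | bot => exact hu

theorem DValue.dayNumber_addD (hu : IsValidDate u) (n : ℤ) :
    (u.addD n).dayNumber = u.dayNumber + n := by
  cases u with
  | date => exact (isValidDate_addDays_and_dayNumber_eq hu).2
  | bot => exact hu.elim

theorem DValue.addD_mono (hu : IsValidDate u) (hv : IsValidDate v) (h : u.le v) (n : ℤ) :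
    (u.addD n).le (v.addD n) := by
  rw [le_iff_dayNumber_le (hu.addD n) (hv.addD n), dayNumber_addD hu, dayNumber_addD hv]
  gcongr
  exact (le_iff_dayNumber_le hu hv).1 h

theorem monotonicity_addPeriod_general (hr : r = .down ∨ r = .up) (hu : u.IsRoundable)
    (hv : v.IsRoundable) (h : u.le v) (p : Period) :
    (addPeriod r u p).le (addPeriod r v p) := by
  have hu' : ((u.addY p.py).addM p.pm).IsRoundable := (hu.addY _).addM _
  have hv' : ((v.addY p.py).addM p.pm).IsRoundable := (hv.addY _).addM _
  have hmonths : ((u.addY p.py).addM p.pm).le ((v.addY p.py).addM p.pm) :=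
    addM_mono (hu.addY _) (hv.addY _) (addY_mono h _) _
  exact addD_mono (hu'.isValidDate_rnd hr) (hv'.isValidDate_rnd hr) (rnd_mono hr hu' hv' hmonths) _

end Calendar

/-- **Monotonicity of derived period addition**: for all valid dates `D1 < D2`
(in the lexicographic order), every period `p`, and every rounding mode
`r ∈ {↓, ↑}`, one has `D1 +r p ≤ D2 +r p`. -/
theorem monotonicity_addPeriod (y1 m1 d1 y2 m2 d2 : ℤ) (p : Period) (r : RMode)
    (hr : r = RMode.down ∨ r = RMode.up)
    (h1 : ValidDate y1 m1 d1) (h2 : ValidDate y2 m2 d2)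
    (hlt : DateLt y1 m1 d1 y2 m2 d2) :
    DValue.le (addPeriod r (DValue.date y1 m1 d1) p)
      (addPeriod r (DValue.date y2 m2 d2) p) :=
  monotonicity_addPeriod_general hr h1.isRoundable h2.isRoundable hlt.dateLe p
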